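/- Let G = (V,E) be an infinite, connected, 3-regular simple graph with nonnegative Ricci curvature (κ(u,v) ≥ 0 for every edge {u,v}). Then G is isomorphic to the infinite ladder P_ℤ □ K_2, the Cartesian product of the two-sided infinite path with the complete graph on two vertices. -/

import Mathlib

open SimpleGraph

variable {V : Type*}

/-- Combinatorial (unnormalized) graph Laplacian. -/
def lapl (G : SimpleGraph V) [G.LocallyFinite] (f : V → ℝ) (x : V) : ℝ :=
  ∑ y ∈ G.neighborFinset x, (f y - f x)

/-- Lin-Lu-Yau-Ollivier Ricci curvature (limit-free definition):
`κ(u,v) = inf { Δf(u) − Δf(v) : f 1-Lipschitz w.r.t. graph distance, f v − f u = 1 }`. -/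
noncomputable def ricci (G : SimpleGraph V) [G.LocallyFinite] (u v : V) : ℝ :=
  sInf { r : ℝ | ∃ f : V → ℝ,
    (∀ x y : V, |f x - f y| ≤ (G.dist x y : ℝ)) ∧ f v - f u = 1 ∧
    r = lapl G f u - lapl G f v }

/-- Nonnegative Ricci curvature on every edge. -/
def NonnegRicci (G : SimpleGraph V) [G.LocallyFinite] : Prop :=
  ∀ u v : V, G.Adj u v → 0 ≤ ricci G u v
/-- The two-sided infinite path `P_ℤ`: vertices `ℤ`, with `n ∼ n+1`. -/
def pathZ : SimpleGraph ℤ := SimpleGraph.fromRel (fun m n => n = m + 1)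

/-- The infinite ladder `P_ℤ □ K_2`. -/
def infiniteLadder : SimpleGraph (ℤ × Fin 2) :=
  pathZ.boxProd (⊤ : SimpleGraph (Fin 2))

/-!
By transport duality, nonnegative curvature of an edge `uv` of a cubic graph means that the two
further neighbours of `u` can be matched with those of `v` at total distance at most `4`.

Take a geodesic ray `r` from a vertex `o` and let `b n` be the neighbour of `r (n + 1)` off the ray.
Matchings along the ray show that the height of `b n` relative to `r n` is a nonincreasing natural
number, hence eventually constant. Where it is constant, consecutive `b n` must be matched with each
other, so they are adjacent and the ray together with the `b n` spans a one-sided ladder.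

At the end of a one-sided ladder, matchings force the two outgoing edges to lead to distinct
adjacent vertices, which form one more rung. Adding rungs forever gives a two-sided ladder; it
already uses up all three edges at each of its vertices, so by connectedness it is the whole graph.
-/

section Distance

variable {G : SimpleGraph V}

lemma two_lt_dist (hconn : G.Connected) {x y : V} (hne : x ≠ y) (hnadj : ¬ G.Adj x y)
    (hcommon : ∀ z, G.Adj x z → ¬ G.Adj z y) : 2 < G.dist x y := by
  have h : 2 < G.edist x y := two_lt_edist_iff.2 ⟨hne, hnadj, Set.eq_empty_of_forall_notMem
    fun z hz => hcommon z hz.1 hz.2.symm⟩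
  rw [← (hconn x y).coe_dist_eq_edist] at h
  exact_mod_cast h

lemma dist_le_dist_add_one (hconn : G.Connected) (o : V) {x y : V} (h : G.Adj x y) :
    G.dist o x ≤ G.dist o y + 1 :=
  dist_eq_one_iff_adj.2 h.symm ▸ hconn.dist_triangle

lemma exists_adj_dist_add_one_eq (hconn : G.Connected) {x y : V} (hne : x ≠ y) :
    ∃ z, G.Adj x z ∧ G.dist z y + 1 = G.dist x y := by
  obtain ⟨p, hp⟩ := hconn.exists_walk_length_eq_dist x y
  cases p with
  | nil => exact absurd rfl hne
  | @cons _ z _ hxz p =>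
    refine ⟨z, hxz, le_antisymm (hp ▸ Nat.succ_le_succ (dist_le p)) ?_⟩
    rw [dist_comm (u := x), dist_comm (u := z)]
    exact dist_le_dist_add_one hconn y hxz

/-- The geodesic order based at `o`: `x ≤ y` when some geodesic from `o` to `y` runs through `x`.
Its covering relation consists of the edges along which the distance from `o` grows, which makes
Kőnig's lemma for orders produce geodesic rays. -/
abbrev geodesicOrder (hconn : G.Connected) (o : V) : PartialOrder V where
  le x y := G.dist o x + G.dist x y = G.dist o y
  le_refl x := by simp
  le_trans x y z hxy hyz := by
    have := hconn.dist_triangle (u := o) (v := x) (w := z)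
    have := hconn.dist_triangle (u := x) (v := y) (w := z)
    omega
  le_antisymm x y hxy hyx := hconn.dist_eq_zero_iff.1 (by omega)

/-- A ray `r` whose distance from `o` grows by one in each step. It need not start at `o`, so that
the tails of such a ray are again of this kind. -/
structure IsRecedingRay (G : SimpleGraph V) (o : V) (r : ℕ → V) : Prop where
  adj : ∀ n, G.Adj (r n) (r (n + 1))
  dist_succ : ∀ n, G.dist o (r (n + 1)) = G.dist o (r n) + 1

namespace IsRecedingRay

variable {o : V} {r : ℕ → V}

lemma tail (hr : IsRecedingRay G o r) (N : ℕ) : IsRecedingRay G o fun n => r (N + n) :=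
  ⟨fun n => hr.adj (N + n), fun n => hr.dist_succ (N + n)⟩

lemma strictMono_dist (hr : IsRecedingRay G o r) : StrictMono fun n => G.dist o (r n) :=
  strictMono_nat_of_lt_succ fun n => (hr.dist_succ n).ge

lemma injective (hr : IsRecedingRay G o r) : Function.Injective r :=
  Function.Injective.of_comp (f := G.dist o) hr.strictMono_dist.injective

end IsRecedingRay

lemma adj_and_dist_eq_of_covBy (hconn : G.Connected) {o x y : V}
    (h : @CovBy V (geodesicOrder hconn o).toLT x y) :
    G.Adj x y ∧ G.dist o y = G.dist o x + 1 := by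
  let _ := geodesicOrder hconn o
  have hxy : G.dist o x + G.dist x y = G.dist o y := h.le
  obtain ⟨z, hxz, hz⟩ := exists_adj_dist_add_one_eq hconn h.ne
  have hxz' := dist_le_dist_add_one hconn o hxz.symm
  have hozy := hconn.dist_triangle (u := o) (v := z) (w := y)
  have hx_le : x ≤ z := by
    change G.dist o x + G.dist x z = G.dist o z
    rw [dist_eq_one_iff_adj.2 hxz]
    omega
  have hz_le : z ≤ y := by
    change G.dist o z + G.dist z y = G.dist o y
    omega
  obtain rfl := (h.eq_or_eq hx_le hz_le).resolve_left hxz.ne'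
  exact ⟨hxz, by omega⟩

lemma exists_isRecedingRay [Infinite V] [G.LocallyFinite] (hconn : G.Connected) (o : V) :
    ∃ r, IsRecedingRay G o r := by
  let _ := geodesicOrder hconn o
  have hwf : WellFoundedLT V := StrictMono.wellFoundedLT (f := G.dist o) fun x y hxy => by
    have hle : G.dist o x + G.dist x y = G.dist o y := hxy.le
    have := hconn.pos_dist_of_ne hxy.ne
    omega
  have hfinite (x : V) : {y | x ⋖ y}.Finite := (G.neighborSet x).toFinite.subset
    fun y hxy => (adj_and_dist_eq_of_covBy hconn hxy).1
  have habove : Set.Ici o = Set.univ := Set.eq_univ_of_forall fun x => by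
    change G.dist o o + G.dist o x = G.dist o x
    simp
  obtain ⟨r, -, hr⟩ := exists_seq_covby_of_forall_covby_finite hfinite
    (habove ▸ Set.infinite_univ)
  exact ⟨r, fun n => (adj_and_dist_eq_of_covBy hconn (hr n)).1,
    fun n => (adj_and_dist_eq_of_covBy hconn (hr n)).2⟩

end Distance

section Curvature

variable {G : SimpleGraph V} [G.LocallyFinite]

lemma abs_lapl_le_degree {f : V → ℝ} (hf : ∀ x y, |f x - f y| ≤ G.dist x y) (x : V) :
    |lapl G f x| ≤ G.degree x := by
  refine (Finset.abs_sum_le_sum_abs _ _).trans ?_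
  refine (Finset.sum_le_card_nsmul _ _ 1 fun y hy => ?_).trans_eq (by simp)
  have hyx : G.Adj y x := ((G.mem_neighborFinset x y).1 hy).symm
  simpa [dist_eq_one_iff_adj.2 hyx] using hf y x

lemma lapl_le_lapl_of_nonneg_ricci {u v : V} (hric : 0 ≤ ricci G u v) {f : V → ℝ}
    (hf : ∀ x y, |f x - f y| ≤ G.dist x y) (huv : f v - f u = 1) :
    lapl G f v ≤ lapl G f u := by
  refine sub_nonneg.1 (hric.trans (csInf_le ⟨-(G.degree u + G.degree v), ?_⟩ ⟨f, hf, huv, rfl⟩))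
  rintro _ ⟨g, hg, -, rfl⟩
  have hu := abs_le.1 (abs_lapl_le_degree hg u)
  have hv := abs_le.1 (abs_lapl_le_degree hg v)
  linarith [hu.1, hv.2]

end Curvature

/-- The vertices `x`, `y`, `z` enumerate the neighbours of `v` without repetition. -/
structure HasNeighbors (G : SimpleGraph V) (v x y z : V) : Prop where
  ne₁₂ : x ≠ y
  ne₁₃ : x ≠ z
  ne₂₃ : y ≠ z
  adj_iff : ∀ w, G.Adj v w ↔ w = x ∨ w = y ∨ w = z

namespace HasNeighbors

variable {G : SimpleGraph V} {v x y z : V}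

lemma adj₁ (h : HasNeighbors G v x y z) : G.Adj v x := (h.adj_iff x).2 (by simp)

lemma adj₂ (h : HasNeighbors G v x y z) : G.Adj v y := (h.adj_iff y).2 (by simp)

lemma adj₃ (h : HasNeighbors G v x y z) : G.Adj v z := (h.adj_iff z).2 (by simp)

lemma rotate (h : HasNeighbors G v x y z) : HasNeighbors G v y z x :=
  ⟨h.ne₂₃, h.ne₁₂.symm, h.ne₁₃.symm, fun w => by rw [h.adj_iff]; tauto⟩

lemma swap (h : HasNeighbors G v x y z) : HasNeighbors G v x z y :=
  ⟨h.ne₁₃, h.ne₁₂, h.ne₂₃.symm, fun w => by rw [h.adj_iff]; tauto⟩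

lemma lapl_eq [G.LocallyFinite] (h : HasNeighbors G v x y z) (f : V → ℝ) :
    lapl G f v = f x + f y + f z - 3 * f v := by
  classical
  have hN : G.neighborFinset v = {x, y, z} := by
    ext w
    simp [h.adj_iff]
  rw [lapl, hN, Finset.sum_insert (by simp [h.ne₁₂, h.ne₁₃]),
    Finset.sum_insert (by simp [h.ne₂₃]), Finset.sum_singleton]
  ring

end HasNeighbors

section Cubic

variable {G : SimpleGraph V} [G.LocallyFinite]

lemma hasNeighbors_of_adj {v x y z : V} (hdeg : G.degree v = 3) (hx : G.Adj v x)
    (hy : G.Adj v y) (hz : G.Adj v z) (hxy : x ≠ y) (hxz : x ≠ z) (hyz : y ≠ z) :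
    HasNeighbors G v x y z := by
  classical
  have hN : {x, y, z} = G.neighborFinset v := Finset.eq_of_subset_of_card_le
    (by simp [Finset.insert_subset_iff, hx, hy, hz])
    (by rw [card_neighborFinset_eq_degree, hdeg,
      Finset.card_eq_three.2 ⟨x, y, z, hxy, hxz, hyz, rfl⟩])
  exact ⟨hxy, hxz, hyz, fun w => by rw [← mem_neighborFinset, ← hN]; simp⟩

lemma exists_hasNeighbors {v x y : V} (hdeg : G.degree v = 3) (hx : G.Adj v x)
    (hy : G.Adj v y) (hxy : x ≠ y) : ∃ z, HasNeighbors G v x y z := by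
  classical
  obtain ⟨z, hz, hznot⟩ := Finset.exists_mem_notMem_of_card_lt_card (s := {x, y})
    (t := G.neighborFinset v)
    (by rw [Finset.card_pair hxy, card_neighborFinset_eq_degree, hdeg]; norm_num)
  simp only [Finset.mem_insert, Finset.mem_singleton, not_or] at hznot
  exact ⟨z, hasNeighbors_of_adj hdeg hx hy ((G.mem_neighborFinset v z).1 hz) hxy
    (Ne.symm hznot.1) (Ne.symm hznot.2)⟩

lemma exists_hasNeighbors_of_adj {v x : V} (hdeg : G.degree v = 3) (hx : G.Adj v x) :
    ∃ y z, HasNeighbors G v x y z := by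
  obtain ⟨y, hy, hyx⟩ := Finset.exists_mem_ne (s := G.neighborFinset v)
    (by rw [card_neighborFinset_eq_degree, hdeg]; norm_num) x
  exact ⟨y, exists_hasNeighbors hdeg hx ((G.mem_neighborFinset v y).1 hy) hyx.symm⟩

/-! ### Transport across an edge -/

lemma dist_lt_of_nonneg_ricci (hconn : G.Connected) {u v a b c d : V} (hric : 0 ≤ ricci G u v)
    (hu : HasNeighbors G u v a b) (hv : HasNeighbors G v u c d) (hac : 3 ≤ G.dist a c)
    (had : 3 ≤ G.dist a d) (hbc : 2 ≤ G.dist b c) : G.dist b d < 2 := by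
  by_contra! hbd
  let f : V → ℕ := fun x => min (G.dist a x) (G.dist b x + 1)
  have hlip (x y : V) : f x ≤ f y + G.dist x y := by
    have hax := hconn.dist_triangle (u := a) (v := y) (w := x)
    have hbx := hconn.dist_triangle (u := b) (v := y) (w := x)
    rw [dist_comm (u := y)] at hax hbx
    simp only [f]
    omega
  have hlip' (x y : V) : |(f x : ℝ) - f y| ≤ G.dist x y := by
    rw [abs_sub_le_iff, sub_le_iff_le_add', sub_le_iff_le_add']
    exact ⟨by exact_mod_cast hlip x y, by exact_mod_cast dist_comm (G := G) ▸ hlip y x⟩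
  have hau : G.dist a u = 1 := dist_eq_one_iff_adj.2 hu.adj₂.symm
  have hbu : G.dist b u = 1 := dist_eq_one_iff_adj.2 hu.adj₃.symm
  have hav := dist_le_dist_add_one hconn a hv.adj₁
  have hav' := dist_le_dist_add_one hconn a hv.adj₂.symm
  have hbv' := dist_le_dist_add_one hconn b hv.adj₂.symm
  have hfa : f a = 0 := by simp [f]
  have hfb : f b ≤ 1 := by simp [f]
  have hfu : f u = 1 := by simp only [f]; omega
  have hfv : f v = 2 := by simp only [f]; omega
  have hfc : 3 ≤ f c := by simp only [f]; omega
  have hfd : 3 ≤ f d := by simp only [f]; omega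
  have hlapl := lapl_le_lapl_of_nonneg_ricci hric (f := fun x => f x) hlip'
    (by rw [hfu, hfv]; norm_num)
  rw [hu.lapl_eq, hv.lapl_eq, hfa, hfu, hfv] at hlapl
  have : (f c : ℝ) + f d ≤ f b + 4 := by push_cast at hlapl; linarith
  norm_cast at this
  omega

-- Otherwise all pairs are at distance at least `2`, and each matching contains a pair at distance
-- `3`. Two such pairs share a vertex, contradicting `dist_lt_of_nonneg_ricci` for `uv` or `vu`.
lemma exists_matching_dist_le_four (hconn : G.Connected) (hric : NonnegRicci G) {u v a b c d : V}
    (hu : HasNeighbors G u v a b) (hv : HasNeighbors G v u c d) :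
    G.dist a c + G.dist b d ≤ 4 ∨ G.dist a d + G.dist b c ≤ 4 := by
  have dist_le_three {x y : V} (hx : G.Adj u x) (hy : G.Adj v y) : G.dist x y ≤ 3 :=
    dist_le (.cons hx.symm (.cons hu.adj₁ (.cons hy .nil)))
  have hac := dist_le_three hu.adj₂ hv.adj₂
  have had := dist_le_three hu.adj₂ hv.adj₃
  have hbc := dist_le_three hu.adj₃ hv.adj₂
  have hbd := dist_le_three hu.adj₃ hv.adj₃
  have huv := hric u v hu.adj₁
  have hvu := hric v u hv.adj₁
  have rowA := dist_lt_of_nonneg_ricci hconn huv hu hv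
  have rowB := dist_lt_of_nonneg_ricci hconn huv hu.swap hv
  have colC := dist_lt_of_nonneg_ricci hconn hvu hv hu
  have colD := dist_lt_of_nonneg_ricci hconn hvu hv.swap hu
  simp only [dist_comm (u := c), dist_comm (u := d)] at colC colD
  omega

end Cubic

/-! ### Ladders -/

/-- The ladder with rungs `{L n 0, L n 1}`: one-sided for `ι = ℕ` and two-sided for `ι = ℤ`. The
graph `G` may have further edges between the vertices of the ladder. -/
structure IsLadder {ι : Type*} [Add ι] [One ι] (G : SimpleGraph V) (L : ι → Fin 2 → V) : Prop where
  step : ∀ n i, G.Adj (L n i) (L (n + 1) i)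
  rung : ∀ n ⦃i j⦄, i ≠ j → G.Adj (L n i) (L n j)
  injective : Function.Injective (Function.uncurry L)

section Ladder

variable {ι : Type*} [Add ι] [One ι] {G : SimpleGraph V} {L : ι → Fin 2 → V}

lemma IsLadder.apply_eq_iff (hL : IsLadder G L) {m n : ι} {i j : Fin 2} :
    L m i = L n j ↔ m = n ∧ i = j :=
  (hL.injective.eq_iff (a := (m, i)) (b := (n, j))).trans Prod.mk_inj

lemma IsLadder.hasNeighbors [G.LocallyFinite] (hL : IsLadder G L)
    (hreg : ∀ v, G.degree v = 3) {n : ι} (hn : n ≠ n + 1 + 1) {i j : Fin 2}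
    (hij : i ≠ j) :
    HasNeighbors G (L (n + 1) i) (L n i) (L (n + 1 + 1) i) (L (n + 1) j) := by
  refine hasNeighbors_of_adj (hreg _) (hL.step n i).symm (hL.step _ i) (hL.rung _ hij) ?_ ?_ ?_
  · exact fun h => hn (hL.apply_eq_iff.1 h).1
  · exact fun h => hij (hL.apply_eq_iff.1 h).2
  · exact fun h => hij (hL.apply_eq_iff.1 h).2

end Ladder

/-! ### A one-sided ladder along a geodesic ray -/

section Ray

variable {G : SimpleGraph V} {o : V} {r b : ℕ → V}

lemma dist_third_neighbor_mem_Icc (hconn : G.Connected) (hr : IsRecedingRay G o r) {n : ℕ}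
    (hb : HasNeighbors G (r (n + 1)) (r n) (r (n + 2)) (b n)) :
    G.dist o (b n) ∈ Set.Icc (G.dist o (r n)) (G.dist o (r (n + 2))) := by
  have := dist_le_dist_add_one hconn o hb.adj₃
  have := dist_le_dist_add_one hconn o hb.adj₃.symm
  have := hr.dist_succ n
  have : G.dist o (r (n + 2)) = _ := hr.dist_succ (n + 1)
  constructor <;> omega

lemma ray_ne_third_neighbor (hconn : G.Connected) (hr : IsRecedingRay G o r)
    {n : ℕ} (hb : HasNeighbors G (r (n + 1)) (r n) (r (n + 2)) (b n)) (k : ℕ) : r k ≠ b n := by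
  intro h
  obtain ⟨hle, hge⟩ := dist_third_neighbor_mem_Icc hconn hr hb
  rw [← h] at hle hge
  have hnk : n ≤ k := hr.strictMono_dist.le_iff_le.1 hle
  have hkn : k ≤ n + 2 := hr.strictMono_dist.le_iff_le.1 hge
  obtain rfl | rfl | rfl : k = n ∨ k = n + 1 ∨ k = n + 2 := by omega
  exacts [hb.ne₁₃ h, hb.adj₃.ne h, hb.ne₂₃ h]

variable [G.LocallyFinite]

lemma dist_third_neighbor_succ_le (hconn : G.Connected) (hric : NonnegRicci G)
    (hr : IsRecedingRay G o r) {n : ℕ} (hb : HasNeighbors G (r (n + 1)) (r n) (r (n + 2)) (b n))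
    (hb' : HasNeighbors G (r (n + 2)) (r (n + 1)) (r (n + 3)) (b (n + 1))) :
    G.dist o (b (n + 1)) ≤ G.dist o (b n) + 1 := by
  have := hr.dist_succ n
  have : G.dist o (r (n + 2)) = _ := hr.dist_succ (n + 1)
  have : G.dist o (r (n + 3)) = _ := hr.dist_succ (n + 2)
  have := hconn.dist_triangle (u := o) (v := r n) (w := r (n + 3))
  have := hconn.dist_triangle (u := o) (v := b n) (w := r (n + 3))
  have := hconn.dist_triangle (u := o) (v := r n) (w := b (n + 1))
  have := hconn.dist_triangle (u := o) (v := b n) (w := b (n + 1))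
  have := exists_matching_dist_le_four hconn hric hb.rotate.swap hb'
  omega

lemma eventually_dist_third_neighbor_succ (hconn : G.Connected) (hric : NonnegRicci G)
    (hr : IsRecedingRay G o r)
    (hb : ∀ n, HasNeighbors G (r (n + 1)) (r n) (r (n + 2)) (b n)) :
    ∃ N, ∀ n, N ≤ n → G.dist o (b (n + 1)) = G.dist o (b n) + 1 := by
  have hle (n : ℕ) : G.dist o (r n) ≤ G.dist o (b n) :=
    (dist_third_neighbor_mem_Icc hconn hr (hb n)).1
  have hanti : Antitone fun n => G.dist o (b n) - G.dist o (r n) :=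
    antitone_nat_of_succ_le fun n => by
      have := dist_third_neighbor_succ_le hconn hric hr (hb n) (hb (n + 1))
      rw [hr.dist_succ]
      omega
  obtain ⟨N, hN⟩ := WellFoundedLT.antitone_chain_condition hanti
  refine ⟨N, fun n hn => ?_⟩
  have := (hN n hn).symm.trans (hN (n + 1) (by omega))
  have := hr.dist_succ n
  have := hle n
  have := hle (n + 1)
  omega

lemma adj_third_neighbor_succ (hconn : G.Connected) (hric : NonnegRicci G)
    (hr : IsRecedingRay G o r)
    (hb : ∀ n, HasNeighbors G (r (n + 1)) (r n) (r (n + 2)) (b n))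
    (hlevel : ∀ n, G.dist o (b (n + 1)) = G.dist o (b n) + 1) (n : ℕ) :
    G.Adj (b (n + 1)) (b (n + 2)) := by
  have hb_inj : Function.Injective b := Function.Injective.of_comp (f := G.dist o)
    (strictMono_nat_of_lt_succ fun n => (hlevel n).ge).injective
  have eq_of_adj {k m : ℕ} (h : G.Adj (r (k + 1)) (b m)) : m = k := by
    obtain h | h | h := ((hb k).adj_iff _).1 h
    · exact absurd h.symm (ray_ne_third_neighbor hconn hr (hb m) k)
    · exact absurd h.symm (ray_ne_third_neighbor hconn hr (hb m) (k + 2))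
    · exact hb_inj h
  have hb₁ := hlevel n
  have hb₂ : G.dist o (b (n + 2)) = _ := hlevel (n + 1)
  have hr₁ := hr.dist_succ n
  have hr₂ : G.dist o (r (n + 2)) = _ := hr.dist_succ (n + 1)
  have hr₃ : G.dist o (r (n + 3)) = _ := hr.dist_succ (n + 2)
  have hr₄ : G.dist o (r (n + 4)) = _ := hr.dist_succ (n + 3)
  have hrb := (dist_third_neighbor_mem_Icc hconn hr (hb n)).1
  have hcross : 2 < G.dist (r (n + 1)) (b (n + 2)) := by
    refine two_lt_dist hconn (ray_ne_third_neighbor hconn hr (hb _) _)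
      (fun h => by have := eq_of_adj h; omega) fun z hz hzb => ?_
    have := dist_le_dist_add_one hconn o hzb.symm
    obtain rfl | rfl | rfl := ((hb n).adj_iff z).1 hz
    · omega
    · have := eq_of_adj hzb
      omega
    · omega
  have hcross' : 1 < G.dist (b (n + 1)) (r (n + 4)) := by
    rw [dist_comm]
    exact hconn.one_lt_dist_of_ne_of_not_adj (ray_ne_third_neighbor hconn hr (hb _) _)
      fun h => by have := eq_of_adj h; omega
  have := hconn.dist_triangle (u := o) (v := r (n + 1)) (w := r (n + 4))
  have : G.dist (r (n + 1)) (r (n + 4)) + _ ≤ 4 ∨ _ :=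
    exists_matching_dist_le_four hconn hric (hb (n + 1)).rotate.swap (hb (n + 2))
  refine dist_eq_one_iff_adj.1 (le_antisymm (by omega) (hconn.pos_dist_of_ne fun h => ?_))
  have := congrArg (G.dist o) h
  omega

lemma isLadder_ray_third_neighbor (hconn : G.Connected) (hric : NonnegRicci G)
    (hr : IsRecedingRay G o r)
    (hb : ∀ n, HasNeighbors G (r (n + 1)) (r n) (r (n + 2)) (b n))
    (hlevel : ∀ n, G.dist o (b (n + 1)) = G.dist o (b n) + 1) :
    IsLadder G fun n : ℕ => ![r (n + 2), b (n + 1)] := by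
  have hb_inj : Function.Injective b := Function.Injective.of_comp (f := G.dist o)
    (strictMono_nat_of_lt_succ fun n => (hlevel n).ge).injective
  refine ⟨fun n => ?_, fun n => ?_, ?_⟩
  · exact Fin.forall_fin_two.2
      ⟨hr.adj (n + 2), adj_third_neighbor_succ hconn hric hr hb hlevel n⟩
  · simpa [Fin.forall_fin_two] using ⟨(hb (n + 1)).adj₃, (hb (n + 1)).adj₃.symm⟩
  · rintro ⟨m, i⟩ ⟨n, j⟩ h
    have hne (m n : ℕ) := ray_ne_third_neighbor hconn hr (hb n) m
    have hne' (m n : ℕ) := (hne m n).symm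
    fin_cases i <;> fin_cases j <;>
      simp_all [Function.uncurry, hr.injective.eq_iff, hb_inj.eq_iff]

end Ray

lemma exists_isLadder_nat {G : SimpleGraph V} [Infinite V] [G.LocallyFinite]
    (hconn : G.Connected) (hreg : ∀ v, G.degree v = 3) (hric : NonnegRicci G) :
    ∃ L : ℕ → Fin 2 → V, IsLadder G L := by
  obtain ⟨o⟩ := hconn.nonempty
  obtain ⟨r, hr⟩ := exists_isRecedingRay hconn o
  choose b hb using fun n => exists_hasNeighbors (hreg (r (n + 1))) (hr.adj n).symm
    (hr.adj (n + 1)) (hr.injective.ne (by omega))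
  obtain ⟨N, hN⟩ := eventually_dist_third_neighbor_succ hconn hric hr hb
  exact ⟨_, isLadder_ray_third_neighbor (b := fun n => b (N + n)) hconn hric (hr.tail N)
    (fun n => hb (N + n)) fun n => hN (N + n) (by omega)⟩

/-! ### Adding a rung to a one-sided ladder -/

/-- The vertices `v 0` and `v 1` are the third neighbours of the two ends of the first rung of the
one-sided ladder `L`. In a cubic graph the edges to them are the only ones leaving the ladder. -/
def IsLadderEnd (G : SimpleGraph V) (L : ℕ → Fin 2 → V) (v : Fin 2 → V) : Prop :=
  ∀ ⦃i j⦄, i ≠ j → HasNeighbors G (L 0 i) (L 1 i) (L 0 j) (v i)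

section LadderEnd

variable {G : SimpleGraph V} [G.LocallyFinite] {L : ℕ → Fin 2 → V} {v : Fin 2 → V}

lemma IsLadder.exists_isLadderEnd (hL : IsLadder G L) (hreg : ∀ v, G.degree v = 3) :
    ∃ v, IsLadderEnd G L v := by
  have hne (i j : Fin 2) : L 1 i ≠ L 0 j := fun h =>
    one_ne_zero (hL.apply_eq_iff.1 h).1
  choose v hv using fun i : Fin 2 => exists_hasNeighbors (hreg (L 0 i)) (hL.step 0 i)
    (hL.rung 0 (show i ≠ i + 1 by omega)) (hne i (i + 1))
  refine ⟨v, fun i j hij => ?_⟩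
  obtain rfl : j = i + 1 := by omega
  exact hv i

namespace IsLadderEnd

lemma ne_ladder (hv : IsLadderEnd G L v) (hL : IsLadder G L) (hreg : ∀ v, G.degree v = 3)
    (i : Fin 2) (m : ℕ) (k : Fin 2) : v i ≠ L m k := by
  intro h
  obtain ⟨j, hji⟩ := exists_ne i
  have hvi := hv hji.symm
  cases m with
  | zero =>
    obtain rfl | rfl : k = i ∨ k = j := by omega
    exacts [hvi.adj₃.ne' h, hvi.ne₂₃ h.symm]
  | succ n =>
    obtain ⟨l, hlk⟩ := exists_ne k
    have hadj : G.Adj (L (n + 1) k) (L 0 i) := h ▸ hvi.adj₃.symm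
    rw [(hL.hasNeighbors hreg (by omega) hlk.symm).adj_iff] at hadj
    simp only [hL.apply_eq_iff] at hadj
    obtain ⟨rfl, rfl⟩ : n = 0 ∧ k = i := by omega
    exact hvi.ne₁₃ h.symm

lemma eq_of_adj (hv : IsLadderEnd G L v) (hL : IsLadder G L) (hreg : ∀ v, G.degree v = 3)
    {n : ℕ} {i : Fin 2} {y : V} (hy : ∀ m k, y ≠ L m k) (h : G.Adj (L n i) y) :
    n = 0 ∧ y = v i := by
  obtain ⟨j, hij⟩ := exists_ne i
  cases n with
  | zero =>
    obtain h | h | h := ((hv hij.symm).adj_iff y).1 h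
    exacts [absurd h (hy _ _), absurd h (hy _ _), ⟨rfl, h⟩]
  | succ n =>
    obtain h | h | h := ((hL.hasNeighbors hreg (by omega) hij.symm).adj_iff y).1 h
    exacts [absurd h (hy _ _), absurd h (hy _ _), absurd h (hy _ _)]

lemma ne (hv : IsLadderEnd G L v) (hL : IsLadder G L) (hconn : G.Connected)
    (hreg : ∀ v, G.degree v = 3) (hric : NonnegRicci G) {i j : Fin 2} (hij : i ≠ j) :
    v i ≠ v j := by
  intro h
  have hv_eq (k : Fin 2) : v k = v i := by
    obtain rfl | rfl : k = i ∨ k = j := by omega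
    exacts [rfl, h.symm]
  obtain ⟨q, hp⟩ := exists_hasNeighbors (hreg (v i)) (hv hij).adj₃.symm
    (h ▸ (hv hij.symm).adj₃.symm) (hL.rung 0 hij).ne
  have eq_of_adj {m k y} (hy : ∀ m k, y ≠ L m k) (h : G.Adj (L m k) y) : y = v i :=
    (hv.eq_of_adj hL hreg hy h).2.trans (hv_eq k)
  have hq : ∀ m k, q ≠ L m k := by
    rintro m k rfl
    obtain ⟨rfl, -⟩ := hv.eq_of_adj hL hreg (hv.ne_ladder hL hreg i) hp.adj₃.symm
    obtain rfl | rfl : k = i ∨ k = j := by omega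
    exacts [hp.ne₁₃ rfl, hp.ne₂₃ rfl]
  have hfar {c} (hc : G.Adj q c) (hcv : c ≠ v i) (k : Fin 2) : 2 < G.dist (L 0 k) c := by
    have hcL : ∀ m k, c ≠ L m k := by
      rintro m k rfl
      exact hp.adj₃.ne' (eq_of_adj hq hc.symm)
    refine two_lt_dist hconn (hcL 0 k).symm (fun h => hcv (eq_of_adj hcL h)) fun z hz hzc => ?_
    have hzL : ∀ m k, z ≠ L m k := by
      rintro m k rfl
      exact hcv (eq_of_adj hcL hzc)
    obtain rfl := eq_of_adj hzL hz
    obtain h | h | h := (hp.adj_iff c).1 hzc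
    exacts [hcL _ _ h, hcL _ _ h, hc.ne' h]
  obtain ⟨c, d, hqcd⟩ := exists_hasNeighbors_of_adj (hreg q) hp.adj₃.symm
  have hfar_c := hfar hqcd.adj₂ hqcd.ne₁₂.symm
  have hfar_d := hfar hqcd.adj₃ hqcd.ne₁₃.symm
  have := exists_matching_dist_le_four hconn hric hp.rotate.rotate hqcd
  have := hfar_c i
  have := hfar_c j
  have := hfar_d i
  have := hfar_d j
  omega

lemma adj (hv : IsLadderEnd G L v) (hL : IsLadder G L) (hconn : G.Connected)
    (hreg : ∀ v, G.degree v = 3) (hric : NonnegRicci G) {i j : Fin 2} (hij : i ≠ j) :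
    G.Adj (v i) (v j) := by
  by_contra hnadj
  have outside {y} (hy : G.Adj (v i) y) (hyi : y ≠ L 0 i) : ∀ m k, y ≠ L m k := by
    rintro m k rfl
    obtain ⟨rfl, h⟩ := hv.eq_of_adj hL hreg (hv.ne_ladder hL hreg i) hy.symm
    obtain rfl | rfl : k = i ∨ k = j := by omega
    exacts [hyi rfl, hv.ne hL hconn hreg hric hij h]
  have two_lt {y} (hy : G.Adj (v i) y) (hyi : y ≠ L 0 i) : 2 < G.dist (L 1 i) y := by
    have hyL := outside hy hyi
    refine two_lt_dist hconn (hyL 1 i).symm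
      (fun h => one_ne_zero (hv.eq_of_adj hL hreg hyL h).1) fun z hz hzy => ?_
    obtain rfl | rfl | rfl := ((hL.hasNeighbors hreg (by omega) hij).adj_iff z).1 hz
    · exact hy.ne' (hv.eq_of_adj hL hreg hyL hzy).2
    · exact two_ne_zero (hv.eq_of_adj hL hreg hyL hzy).1
    · exact one_ne_zero (hv.eq_of_adj hL hreg hyL hzy).1
  have one_lt {y} (hy : G.Adj (v i) y) (hyi : y ≠ L 0 i) : 1 < G.dist (L 0 j) y := by
    have hyL := outside hy hyi
    refine hconn.one_lt_dist_of_ne_of_not_adj (hyL 0 j).symm fun h => hnadj ?_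
    rwa [← (hv.eq_of_adj hL hreg hyL h).2]
  obtain ⟨c, d, hcd⟩ := exists_hasNeighbors_of_adj (hreg (v i)) (hv hij).adj₃.symm
  have := exists_matching_dist_le_four hconn hric (hv hij).rotate.rotate hcd
  have := two_lt hcd.adj₂ hcd.ne₁₂.symm
  have := two_lt hcd.adj₃ hcd.ne₁₃.symm
  have := one_lt hcd.adj₂ hcd.ne₁₂.symm
  have := one_lt hcd.adj₃ hcd.ne₁₃.symm
  omega

end IsLadderEnd

lemma IsLadder.exists_extension (hL : IsLadder G L) (hconn : G.Connected)
    (hreg : ∀ v, G.degree v = 3) (hric : NonnegRicci G) :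
    ∃ L' : ℕ → Fin 2 → V, IsLadder G L' ∧ ∀ n, L' (n + 1) = L n := by
  obtain ⟨v, hv⟩ := hL.exists_isLadderEnd hreg
  have hv_inj : Function.Injective v := fun i j h =>
    not_imp_not.1 (hv.ne hL hconn hreg hric) h
  have hvL := hv.ne_ladder hL hreg
  refine ⟨fun n => n.casesOn v L, ⟨fun n i => ?_, fun n i j hij => ?_, ?_⟩, fun n => rfl⟩
  · cases n with
    | zero =>
      obtain ⟨j, hij⟩ := exists_ne i
      exact (hv hij.symm).adj₃.symm
    | succ n => exact hL.step n i
  · cases n with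
    | zero => exact hv.adj hL hconn hreg hric hij
    | succ n => exact hL.rung n hij
  · rintro ⟨m, i⟩ ⟨n, j⟩ h
    cases m <;> cases n
    · exact congrArg _ (hv_inj h)
    · exact absurd h (hvL _ _ _)
    · exact absurd h.symm (hvL _ _ _)
    · simpa [hL.apply_eq_iff] using h

end LadderEnd

/-! ### The two-sided ladder -/

lemma exists_int_seq_of_shift {X : Type*} {A : ℕ → ℕ → X}
    (hA : ∀ k n, A (k + 1) (n + 1) = A k n) : ∃ S : ℤ → X, ∀ k n : ℕ, S (n - k) = A k n := by
  have hshift (m k n : ℕ) : A (k + m) (n + m) = A k n := by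
    induction m with
    | zero => rfl
    | succ m ih => exact (hA _ _).trans ih
  refine ⟨fun z => A (-z).toNat z.toNat, fun k n => (hshift (min k n) _ _).symm.trans ?_⟩
  congr 1 <;> omega

lemma IsLadder.exists_isLadder_int {G : SimpleGraph V} [G.LocallyFinite] {L : ℕ → Fin 2 → V}
    (hL : IsLadder G L) (hconn : G.Connected) (hreg : ∀ v, G.degree v = 3)
    (hric : NonnegRicci G) : ∃ S : ℤ → Fin 2 → V, IsLadder G S := by
  choose next hnext hnext_succ using fun L : {L : ℕ → Fin 2 → V // IsLadder G L} =>
    L.2.exists_extension hconn hreg hric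
  let A (k : ℕ) := (fun L => ⟨next L, hnext L⟩)^[k] (⟨L, hL⟩ : {L // IsLadder G L})
  have hA (k n : ℕ) : (A (k + 1)).1 (n + 1) = (A k).1 n := by
    simp only [A, Function.iterate_succ_apply', hnext_succ]
  obtain ⟨S, hS⟩ := exists_int_seq_of_shift (A := fun k n => (A k).1 n) hA
  have eq_sub (z : ℤ) : z = z.toNat - (-z).toNat := by omega
  refine ⟨S, fun z i => ?_, fun z i j hij => ?_, ?_⟩
  · rw [eq_sub z, sub_add_eq_add_sub, ← Nat.cast_succ, hS, hS]
    exact (A _).2.step _ i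
  · rw [eq_sub z, hS]
    exact (A _).2.rung _ hij
  · rintro ⟨y, i⟩ ⟨z, j⟩ h
    obtain ⟨k, m, n, rfl, rfl⟩ : ∃ k m n : ℕ, y = m - k ∧ z = n - k :=
      ⟨y.natAbs + z.natAbs, (y + (y.natAbs + z.natAbs)).toNat,
        (z + (y.natAbs + z.natAbs)).toNat, by omega, by omega⟩
    simp only [Function.uncurry_apply_pair, hS, (A k).2.apply_eq_iff] at h
    simpa using h

lemma nonempty_iso_of_injective_of_locally_surjective {W : Type*} [Nonempty W]
    {G : SimpleGraph V} {H : SimpleGraph W} (hconn : G.Connected) (f : H →g G)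
    (hf : Function.Injective f)
    (hlocal : ∀ x y, G.Adj (f x) y → ∃ x', H.Adj x x' ∧ f x' = y) : Nonempty (H ≃g G) := by
  have hsurj : Function.Surjective f := by
    intro y
    by_contra hy
    obtain ⟨x⟩ := ‹Nonempty W›
    obtain ⟨p⟩ := hconn (f x) y
    obtain ⟨d, -, ⟨x', hx'⟩, hd⟩ := p.exists_boundary_dart (Set.range f) ⟨x, rfl⟩ hy
    obtain ⟨x'', -, hx''⟩ := hlocal x' d.snd (hx' ▸ d.adj)
    exact hd ⟨x'', hx''⟩
  refine ⟨Equiv.ofBijective f ⟨hf, hsurj⟩, fun {x y} => ⟨fun h => ?_, f.map_adj⟩⟩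
  obtain ⟨y', hxy', hy'⟩ := hlocal x _ h
  exact hf hy' ▸ hxy'

lemma IsLadder.nonempty_iso_infiniteLadder {G : SimpleGraph V} [G.LocallyFinite]
    {S : ℤ → Fin 2 → V} (hS : IsLadder G S) (hconn : G.Connected)
    (hreg : ∀ v, G.degree v = 3) : Nonempty (G ≃g infiniteLadder) := by
  have hpath (m n : ℤ) : pathZ.Adj m n ↔ n = m + 1 ∨ m = n + 1 := by
    simp only [pathZ, fromRel_adj]
    omega
  let f : infiniteLadder →g G :=
    { toFun := Function.uncurry S
      map_rel' := by
        rintro ⟨m, i⟩ ⟨n, j⟩ h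
        obtain ⟨h, rfl⟩ | ⟨h, rfl⟩ := boxProd_adj.1 h
        · obtain rfl | rfl := (hpath m n).1 h
          exacts [hS.step m i, (hS.step n i).symm]
        · exact hS.rung m h }
  refine (nonempty_iso_of_injective_of_locally_surjective hconn f hS.injective ?_).map Iso.symm
  rintro ⟨n, i⟩ y hy
  obtain ⟨j, hji⟩ := exists_ne i
  have hn := hS.hasNeighbors hreg (n := n - 1) (by omega) hji.symm
  rw [sub_add_cancel] at hn
  obtain rfl | rfl | rfl := (hn.adj_iff y).1 hy
  · exact ⟨(n - 1, i), boxProd_adj.2 (.inl ⟨(hpath _ _).2 (by omega), rfl⟩), rfl⟩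
  · exact ⟨(n + 1, i), boxProd_adj.2 (.inl ⟨(hpath _ _).2 (by omega), rfl⟩), rfl⟩
  · exact ⟨(n, j), boxProd_adj.2 (.inr ⟨hji.symm, rfl⟩), rfl⟩

/-- An infinite, connected, 3-regular simple graph with nonnegative Ricci
curvature is isomorphic to the infinite ladder `P_ℤ □ K_2`. -/
theorem cubic_classification_infinite (G : SimpleGraph V) [Infinite V] [G.LocallyFinite]
    (hconn : G.Connected) (hreg : ∀ v : V, G.degree v = 3) (hric : NonnegRicci G) :
    Nonempty (G ≃g infiniteLadder) := by
  obtain ⟨L, hL⟩ := exists_isLadder_nat hconn hreg hric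
  obtain ⟨S, hS⟩ := hL.exists_isLadder_int hconn hreg hric
  exact hS.nonempty_iso_infiniteLadder hconn hreg
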